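/- arXiv:1207.0705 — 2 statements merged into one kernel-verified Lean document; each statement's English description precedes it below -/
import Mathlib

section
/- Let Q be a finite set of polynomials in ℝ[X,Y], let σ : Q → {−1,0,1}, and let D and G be finite sets of pairs (p, p′) of polynomials with p, p′ ∈ Q and σ(p′) ≠ 0 for every denominator p′ occurring in D ∪ G. Define, for reals L and H, Ξ(L,H) := ∃ X, Y ∈ ℝ such that sgn q(X,Y) = σ(q) for all q ∈ Q, p(X,Y)/p′(X,Y) ≤ L for all (p,p′) ∈ D, and p(X,Y)/p′(X,Y) ≥ H for all (p,p′) ∈ G. Then the following two statements are equivalent: Ψ: for every n ∈ ℕ and every real R ≥ 2 there exist reals L and H with L ≥ R, H ≥ L^(R^(n+2)), and Ξ(L,H); and Ψ*: for every real R ≥ 2 there exists a real L ≥ R such that Ξ(L,H) holds for every real H. -/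
/-- The formula `Ξ(L,H)`: there exist reals `X, Y` realizing the prescribed signs `σ`
on `Q`, making all ratios from `D` at most `L`, and all ratios from `G` at least `H`. -/
def Xi (Q : Finset (MvPolynomial (Fin 2) ℝ)) (σ : MvPolynomial (Fin 2) ℝ → ℝ)
    (D G : Finset (MvPolynomial (Fin 2) ℝ × MvPolynomial (Fin 2) ℝ)) (L H : ℝ) : Prop :=
  ∃ X Y : ℝ,
    (∀ q ∈ Q, Real.sign (MvPolynomial.eval ![X, Y] q) = σ q) ∧
    (∀ pp ∈ D,
      MvPolynomial.eval ![X, Y] pp.1 / MvPolynomial.eval ![X, Y] pp.2 ≤ L) ∧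
    (∀ pp ∈ G,
      H ≤ MvPolynomial.eval ![X, Y] pp.1 / MvPolynomial.eval ![X, Y] pp.2)

open Polynomial Filter Set in
/-- Pseudo-division of polynomials over a commutative ring. -/
theorem Polynomial.exists_pseudo_division {A : Type*} [CommRing A] (f g : A[X]) (hg : g ≠ 0) :
    ∃ (k : ℕ) (q r : A[X]), C (g.leadingCoeff ^ k) * f = q * g + r ∧ r.degree < g.degree := by
  suffices h : ∀ (n : ℕ) (f : A[X]), f.degree < (n : WithBot ℕ) →
      ∃ (k : ℕ) (q r : A[X]), C (g.leadingCoeff ^ k) * f = q * g + r ∧ r.degree < g.degree by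
    refine h (f.natDegree + 1) f (lt_of_le_of_lt degree_le_natDegree ?_)
    exact_mod_cast Nat.lt_succ_self _
  intro n
  induction n with
  | zero =>
    intro f hf
    have : f = 0 := by
      rw [← degree_eq_bot]
      exact Nat.WithBot.lt_zero_iff.1 (by exact_mod_cast hf)
    exact ⟨0, 0, 0, by simp [this], by simpa [bot_lt_iff_ne_bot] using hg⟩
  | succ n ih =>
    intro f hf
    by_cases hfg : f.degree < g.degree
    · exact ⟨0, 0, f, by simp, hfg⟩
    have hmn : g.natDegree ≤ n := by
      rw [not_lt, degree_eq_natDegree hg] at hfg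
      have := lt_of_le_of_lt hfg hf
      have h2 : g.natDegree < n + 1 := by exact_mod_cast this
      omega
    have hlt : (C g.leadingCoeff * f - C (f.coeff n) * (X ^ (n - g.natDegree) * g)).degree <
        (n : WithBot ℕ) := by
      rw [degree_lt_iff_coeff_zero]
      intro i hi
      rw [coeff_sub, coeff_C_mul, coeff_C_mul, coeff_X_pow_mul', if_pos (by omega)]
      rcases hi.eq_or_lt with rfl | hi
      · rw [Nat.sub_sub_self hmn, coeff_natDegree, mul_comm, sub_self]
      · rw [coeff_eq_zero_of_degree_lt (lt_of_lt_of_le hf (by exact_mod_cast hi)),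
          coeff_eq_zero_of_natDegree_lt (p := g) (by omega), mul_zero, mul_zero, sub_zero]
    obtain ⟨k, q, r, h, hr⟩ := ih _ hlt
    refine ⟨k + 1, q + C (g.leadingCoeff ^ k) * C (f.coeff n) * X ^ (n - g.natDegree), r, ?_, hr⟩
    rw [pow_succ, C_mul]
    linear_combination h

open Filter Set in
/-- A point of an open interval can be moved to any larger point of the interval
by an increasing bijection of the line supported on the interval. -/
theorem exists_orderIso_of_lt {a b r s : ℝ} (har : a < r) (hrs : r < s) (hsb : s < b) :
    ∃ u : ℝ ≃o ℝ, u r = s ∧ ∀ x ∉ Ioo a b, u x = x := by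
  have h1 : 0 < (s - a) / (r - a) := div_pos (by linarith) (by linarith)
  have h1' : 1 ≤ (s - a) / (r - a) := by rw [one_le_div (by linarith)]; linarith
  have h2 : 0 < (b - s) / (b - r) := div_pos (by linarith) (by linarith)
  have h2' : (b - s) / (b - r) ≤ 1 := by rw [div_le_one (by linarith)]; linarith
  let v : ℝ → ℝ := fun x =>
    max x (min (a + (s - a) / (r - a) * (x - a)) (b - (b - s) / (b - r) * (b - x)))
  have hmono : StrictMono v := by
    intro x y hxy
    refine max_lt_max hxy (min_lt_min ?_ ?_)
    · have := mul_lt_mul_of_pos_left hxy h1; linarith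
    · have := mul_lt_mul_of_pos_left hxy h2; linarith
  have hout : ∀ x ∉ Ioo a b, v x = x := by
    intro x hx
    refine max_eq_left ?_
    rcases le_or_gt x a with h | h
    · exact (min_le_left _ _).trans (by nlinarith)
    · have hb : b ≤ x := not_lt.1 fun hb => hx ⟨h, hb⟩
      exact (min_le_right _ _).trans (by nlinarith)
  have hcont : Continuous v := by fun_prop
  have hsurj : Function.Surjective v := by
    refine hcont.surjective (tendsto_atTop_mono (fun x => le_max_left _ _) tendsto_id) ?_
    refine tendsto_id.congr' ?_
    filter_upwards [eventually_le_atBot a] with x hx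
    exact (hout x fun h => not_lt.2 hx h.1).symm
  refine ⟨hmono.orderIsoOfSurjective v hsurj, ?_, fun x hx => hout x hx⟩
  change max r (min _ _) = s
  rw [div_mul_cancel₀ _ (by linarith), div_mul_cancel₀ _ (by linarith)]
  simp [hrs.le]

open Set in
theorem exists_orderIso_of_mem_Ioo {a b r s : ℝ} (hr : r ∈ Ioo a b) (hs : s ∈ Ioo a b) :
    ∃ u : ℝ ≃o ℝ, u r = s ∧ ∀ x ∉ Ioo a b, u x = x := by
  rcases lt_trichotomy r s with h | rfl | h
  · exact exists_orderIso_of_lt hr.1 h hs.2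
  · exact ⟨OrderIso.refl ℝ, rfl, fun _ _ => rfl⟩
  · obtain ⟨u, hu, hu'⟩ := exists_orderIso_of_lt hs.1 h hr.2
    refine ⟨u.symm, by rw [← hu, u.symm_apply_apply], fun x hx => ?_⟩
    rw [OrderIso.symm_apply_eq, hu' x hx]

/-- Neither point lies in `Z`, and no element of `Z` separates them. -/
def SameCell (Z : Finset ℝ) (x y : ℝ) : Prop :=
  ∀ z ∈ Z, (x < z ∧ y < z) ∨ (z < x ∧ z < y)

open Set in
theorem SameCell.exists_Ioo {Z : Finset ℝ} {x y : ℝ} (h : SameCell Z x y) :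
    ∃ a b, x ∈ Ioo a b ∧ y ∈ Ioo a b ∧ ∀ z ∈ Z, z ∉ Ioo a b := by
  induction Z using Finset.induction_on with
  | empty =>
    refine ⟨min x y - 1, max x y + 1, ⟨?_, ?_⟩, ⟨?_, ?_⟩, by simp⟩ <;>
    linarith [min_le_left x y, min_le_right x y, le_max_left x y, le_max_right x y]
  | insert z Z _ ih =>
    obtain ⟨a, b, hx, hy, hZ⟩ := ih fun w hw => h w (Finset.mem_insert_of_mem hw)
    rcases h z (Finset.mem_insert_self _ _) with hz | hz
    · refine ⟨a, min b z, ⟨hx.1, lt_min hx.2 hz.1⟩, ⟨hy.1, lt_min hy.2 hz.2⟩, ?_⟩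
      intro w hw hw'
      rcases Finset.mem_insert.1 hw with rfl | hw
      · exact absurd (hw'.2.trans_le (min_le_right _ _)) (lt_irrefl _)
      · exact hZ w hw ⟨hw'.1, hw'.2.trans_le (min_le_left _ _)⟩
    · refine ⟨max a z, b, ⟨max_lt hx.1 hz.1, hx.2⟩, ⟨max_lt hy.1 hz.2, hy.2⟩, ?_⟩
      intro w hw hw'
      rcases Finset.mem_insert.1 hw with rfl | hw
      · exact absurd ((le_max_right _ _).trans_lt hw'.1) (lt_irrefl _)
      · exact hZ w hw ⟨(le_max_left _ _).trans_lt hw'.1, hw'.2⟩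

theorem SameCell.map {Z : Finset ℝ} {u : ℝ ≃o ℝ} (hu : ∀ z ∈ Z, u z = z) {x y : ℝ}
    (h : SameCell Z x y) : SameCell Z (u x) y := by
  intro z hz
  have := h z hz
  rwa [← u.lt_iff_lt, hu z hz, ← u.lt_iff_lt (x := z), hu z hz] at this

theorem SameCell.symm {Z : Finset ℝ} {x y : ℝ} (h : SameCell Z x y) : SameCell Z y x :=
  fun z hz => (h z hz).imp And.symm And.symm

theorem SameCell.refl {Z : Finset ℝ} {x : ℝ} (h : x ∉ Z) : SameCell Z x x := by
  intro z hz
  rcases lt_trichotomy x z with h' | rfl | h'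
  · exact .inl ⟨h', h'⟩
  · exact absurd hz h
  · exact .inr ⟨h', h'⟩

open Set in
/-- Points lying in distinct cells of the complement of a finite set can be moved simultaneously,
each to any point of its cell. -/
theorem exists_orderIso_of_sameCell (Z R : Finset ℝ) (t : ℝ → ℝ)
    (ht : ∀ r ∈ R, SameCell Z r (t r))
    (hR : ∀ r ∈ R, ∀ s ∈ R, SameCell Z r s → r = s) :
    ∃ u : ℝ ≃o ℝ, (∀ z ∈ Z, u z = z) ∧ ∀ r ∈ R, u r = t r := by
  induction R using Finset.induction_on with
  | empty => exact ⟨OrderIso.refl ℝ, fun _ _ => rfl, by simp⟩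
  | insert r R hrR ih =>
    obtain ⟨u, huZ, huR⟩ := ih (fun s hs => ht s (Finset.mem_insert_of_mem hs))
      fun s hs s' hs' => hR s (Finset.mem_insert_of_mem hs) s' (Finset.mem_insert_of_mem hs')
    have hcell : SameCell Z (u r) (t r) := (ht r (Finset.mem_insert_self _ _)).map huZ
    obtain ⟨a, b, hr, htr, hab⟩ := hcell.exists_Ioo
    obtain ⟨v, hvr, hv⟩ := exists_orderIso_of_mem_Ioo hr htr
    refine ⟨u.trans v, fun z hz => ?_, fun s hs => ?_⟩
    · rw [OrderIso.trans_apply, huZ z hz, hv z (hab z hz)]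
    rw [OrderIso.trans_apply]
    rcases Finset.mem_insert.1 hs with rfl | hsR
    · exact hvr
    rw [hv, huR s hsR]
    intro hus
    have hsr : s ≠ r := fun h => hrR (h ▸ hsR)
    refine hsr (hR s hs r (Finset.mem_insert_self _ _) fun z hz => ?_)
    have hz' := hab z hz
    rw [← u.lt_iff_lt, ← u.lt_iff_lt (x := r), ← u.lt_iff_lt (x := z), ← u.lt_iff_lt (x := z),
      huZ z hz]
    rcases le_or_gt z a with h | h
    · exact .inr ⟨h.trans_lt hus.1, h.trans_lt hr.1⟩
    · have hb : b ≤ z := not_lt.1 fun hb => hz' ⟨h, hb⟩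
      exact .inl ⟨hus.2.trans_le hb, hr.2.trans_le hb⟩

open Set in
theorem exists_zero_of_sign_eq_of_monotone {p q : ℝ → ℝ} (hq : Continuous q) {a b r : ℝ}
    (ha : SignType.sign (p a) = SignType.sign (q a))
    (hb : SignType.sign (p b) = SignType.sign (q b))
    (h : (StrictMonoOn p (Icc a b) ∧ StrictMonoOn q (Icc a b)) ∨
      (StrictAntiOn p (Icc a b) ∧ StrictAntiOn q (Icc a b)))
    (hr : r ∈ Ioo a b) (hpr : p r = 0) : ∃ s ∈ Ioo a b, q s = 0 := by
  have hab : a ≤ b := (hr.1.trans hr.2).le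
  rcases h with ⟨h, -⟩ | ⟨h, -⟩
  · have h1 := h (left_mem_Icc.2 hab) (Ioo_subset_Icc_self hr) hr.1
    have h2 := h (Ioo_subset_Icc_self hr) (right_mem_Icc.2 hab) hr.2
    rw [hpr] at h1 h2
    rw [sign_neg h1, eq_comm, sign_eq_neg_one_iff] at ha
    rw [sign_pos h2, eq_comm, sign_eq_one_iff] at hb
    obtain ⟨s, hs, hs'⟩ := intermediate_value_Ioo hab hq.continuousOn ⟨ha, hb⟩
    exact ⟨s, hs, hs'⟩
  · have h1 := h (left_mem_Icc.2 hab) (Ioo_subset_Icc_self hr) hr.1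
    have h2 := h (Ioo_subset_Icc_self hr) (right_mem_Icc.2 hab) hr.2
    rw [hpr] at h1 h2
    rw [sign_pos h1, eq_comm, sign_eq_one_iff] at ha
    rw [sign_neg h2, eq_comm, sign_eq_neg_one_iff] at hb
    obtain ⟨s, hs, hs'⟩ := intermediate_value_Ioo' hab hq.continuousOn ⟨hb, ha⟩
    exact ⟨s, hs, hs'⟩

open Set in
theorem sign_eq_of_strictMonoOn {p q : ℝ → ℝ} (hp : Continuous p) {a b x y : ℝ}
    (ha : SignType.sign (p a) = SignType.sign (q a))
    (hb : SignType.sign (p b) = SignType.sign (q b))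
    (hpm : StrictMonoOn p (Icc a b)) (hqm : StrictMonoOn q (Icc a b))
    (hx : x ∈ Ioo a b) (hy : y ∈ Ioo a b)
    (hr : ∀ r ∈ Ioo a b, p r = 0 → ∃ s ∈ Ioo a b, q s = 0 ∧ (x < r ↔ y < s) ∧ (r < x ↔ s < y)) :
    SignType.sign (p x) = SignType.sign (q y) := by
  have hab : a ≤ b := (hx.1.trans hx.2).le
  have hx' := Ioo_subset_Icc_self hx
  have hy' := Ioo_subset_Icc_self hy
  by_cases h0 : ∃ r ∈ Ioo a b, p r = 0
  · obtain ⟨r, hrab, hr0⟩ := h0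
    obtain ⟨s, hs, hs0, h1, h2⟩ := hr r hrab hr0
    have hr' := Ioo_subset_Icc_self hrab
    have hs' := Ioo_subset_Icc_self hs
    rcases lt_trichotomy x r with hxr | hxr | hxr
    · have hp' := hpm hx' hr' hxr
      have hq' := hqm hy' hs' (h1.1 hxr)
      rw [sign_neg (by linarith), sign_neg (by linarith)]
    · have hys : y = s := le_antisymm (not_lt.1 fun h => hxr.not_gt (h2.2 h))
        (not_lt.1 fun h => hxr.not_lt (h1.2 h))
      rw [hxr, hys, hr0, hs0]
    · have hp' := hpm hr' hx' hxr
      have hq' := hqm hs' hy' (h2.1 hxr)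
      rw [sign_pos (by linarith), sign_pos (by linarith)]
  · push Not at h0
    rcases lt_trichotomy (p x) 0 with hpx | hpx | hpx
    · have hpa := (hpm (left_mem_Icc.2 hab) hx' hx.1).trans hpx
      have hpb : p b ≤ 0 := by
        by_contra! hpb
        obtain ⟨r, hr, hr0⟩ := intermediate_value_Ioo hab hp.continuousOn ⟨hpa, hpb⟩
        exact h0 r hr hr0
      rw [← sign_nonpos_iff, hb, sign_nonpos_iff] at hpb
      have := hqm hy' (right_mem_Icc.2 hab) hy.2
      rw [sign_neg hpx, sign_neg (by linarith)]
    · exact absurd hpx (h0 x hx)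
    · have hpb := hpx.trans (hpm hx' (right_mem_Icc.2 hab) hx.2)
      have hpa : 0 ≤ p a := by
        by_contra! hpa
        obtain ⟨r, hr, hr0⟩ := intermediate_value_Ioo hab hp.continuousOn ⟨hpa, hpb⟩
        exact h0 r hr hr0
      rw [← sign_nonneg_iff, ha, sign_nonneg_iff] at hpa
      have := hqm (left_mem_Icc.2 hab) hy' hy.1
      rw [sign_pos hpx, sign_pos (by linarith)]

open Set in
theorem sign_eq_of_strictAntiOn {p q : ℝ → ℝ} (hp : Continuous p) {a b x y : ℝ}
    (ha : SignType.sign (p a) = SignType.sign (q a))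
    (hb : SignType.sign (p b) = SignType.sign (q b))
    (hpm : StrictAntiOn p (Icc a b)) (hqm : StrictAntiOn q (Icc a b))
    (hx : x ∈ Ioo a b) (hy : y ∈ Ioo a b)
    (hr : ∀ r ∈ Ioo a b, p r = 0 → ∃ s ∈ Ioo a b, q s = 0 ∧ (x < r ↔ y < s) ∧ (r < x ↔ s < y)) :
    SignType.sign (p x) = SignType.sign (q y) := by
  have := sign_eq_of_strictMonoOn (p := fun x => -p x) (q := fun x => -q x) hp.neg (x := x) (y := y)
    (by simp only [Left.sign_neg, ha]) (by simp only [Left.sign_neg, hb]) hpm.neg hqm.neg hx hy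
    (by simpa only [neg_eq_zero] using hr)
  simpa only [Left.sign_neg, neg_inj] using this

open Set in
theorem exists_adjacent_mem (Z : Finset ℝ) {x l m : ℝ} (hx : x ∉ Z) (hl : l ∈ Z) (hlx : l < x)
    (hm : m ∈ Z) (hxm : x < m) :
    ∃ a ∈ Z, ∃ b ∈ Z, x ∈ Ioo a b ∧ (∀ z ∈ Z, z ∉ Ioo a b) ∧
      ∀ y, SameCell Z x y ↔ y ∈ Ioo a b := by
  have h1 : (Z.filter (· < x)).Nonempty := ⟨l, by simp [hl, hlx]⟩
  have h2 : (Z.filter (x < ·)).Nonempty := ⟨m, by simp [hm, hxm]⟩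
  have ha := Finset.max'_mem _ h1
  have hb := Finset.min'_mem _ h2
  have ha' := Finset.le_max' (Z.filter (· < x))
  have hb' := Finset.min'_le (Z.filter (x < ·))
  set a := (Z.filter (· < x)).max' h1
  set b := (Z.filter (x < ·)).min' h2
  rw [Finset.mem_filter] at ha hb
  simp only [Finset.mem_filter] at ha' hb'
  have hdich : ∀ z ∈ Z, z ≤ a ∨ b ≤ z := by
    intro z hz
    rcases lt_trichotomy z x with h | rfl | h
    · exact .inl (ha' z ⟨hz, h⟩)
    · exact absurd hz hx
    · exact .inr (hb' z ⟨hz, h⟩)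
  refine ⟨a, ha.1, b, hb.1, ⟨ha.2, hb.2⟩, ?_, fun y => ⟨fun h => ?_, fun h z hz => ?_⟩⟩
  · intro z hz hz'
    rcases hdich z hz with h | h
    · exact not_lt.2 h hz'.1
    · exact not_lt.2 h hz'.2
  · refine ⟨?_, ?_⟩
    · rcases h a ha.1 with h | h
      · exact absurd h.1 ha.2.not_gt
      · exact h.2
    · rcases h b hb.1 with h | h
      · exact h.2
      · exact absurd h.1 hb.2.not_gt
  · rcases hdich z hz with h' | h'
    · exact .inr ⟨h'.trans_lt ha.2, h'.trans_lt h.1⟩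
    · exact .inl ⟨hb.2.trans_le h', h.2.trans_le h'⟩

open Set in
/-- Two functions that are strictly monotone in the same direction between consecutive points of a
finite set `Z`, and whose signs agree on `Z` and beyond it, have the same signs up to an increasing
bijection of the line fixing `Z`. -/
theorem exists_orderIso_sign_eq {p q : ℝ → ℝ} (hp : Continuous p) (hq : Continuous q)
    (Z R : Finset ℝ) (hR : ∀ x, p x = 0 → x ∈ R) {l m : ℝ} (hl : l ∈ Z) (hm : m ∈ Z)
    (hZ : ∀ z ∈ Z, SignType.sign (p z) = SignType.sign (q z))
    (hpl : ∀ x ≤ l, ∀ y ≤ l, p x ≠ 0 ∧ SignType.sign (p x) = SignType.sign (q y))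
    (hpm : ∀ x, m ≤ x → ∀ y, m ≤ y → p x ≠ 0 ∧ SignType.sign (p x) = SignType.sign (q y))
    (hmono : ∀ a b, a < b → (∀ z ∈ Z, z ∉ Ioo a b) →
      (StrictMonoOn p (Icc a b) ∧ StrictMonoOn q (Icc a b)) ∨
      (StrictAntiOn p (Icc a b) ∧ StrictAntiOn q (Icc a b))) :
    ∃ u : ℝ ≃o ℝ, (∀ z ∈ Z, u z = z) ∧ ∀ x, SignType.sign (p x) = SignType.sign (q (u x)) := by
  have hbetween : ∀ x, p x = 0 → l < x ∧ x < m := fun x hx =>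
    ⟨not_le.1 fun h => (hpl x h x h).1 hx, not_le.1 fun h => (hpm x h x h).1 hx⟩
  have hex : ∀ r, ∃ s, p r = 0 → r ∉ Z → SameCell Z r s ∧ q s = 0 := by
    intro r
    by_cases h : p r = 0 ∧ r ∉ Z
    · obtain ⟨a, ha, b, hb, hab, hZab, hcell⟩ :=
        exists_adjacent_mem Z h.2 hl (hbetween r h.1).1 hm (hbetween r h.1).2
      obtain ⟨s, hs, hs0⟩ := exists_zero_of_sign_eq_of_monotone hq (hZ a ha) (hZ b hb)
        (hmono a b (hab.1.trans hab.2) hZab) hab h.1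
      exact ⟨s, fun _ _ => ⟨(hcell s).2 hs, hs0⟩⟩
    · exact ⟨0, fun h1 h2 => absurd ⟨h1, h2⟩ h⟩
  choose t ht using hex
  have hmem : ∀ r ∈ R.filter (fun r => p r = 0 ∧ r ∉ Z), p r = 0 ∧ r ∉ Z :=
    fun r hr => (Finset.mem_filter.1 hr).2
  obtain ⟨u, huZ, hu⟩ := exists_orderIso_of_sameCell Z (R.filter fun r => p r = 0 ∧ r ∉ Z) t
    (fun r hr => (ht r (hmem r hr).1 (hmem r hr).2).1) <| by
      intro r hr s hs hrs
      obtain ⟨a, b, hra, hsa, hab⟩ := hrs.exists_Ioo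
      have heq : p r = p s := by rw [(hmem r hr).1, (hmem s hs).1]
      rcases hmono a b (hra.1.trans hra.2) hab with h | h
      · exact h.1.injOn (Ioo_subset_Icc_self hra) (Ioo_subset_Icc_self hsa) heq
      · exact h.1.injOn (Ioo_subset_Icc_self hra) (Ioo_subset_Icc_self hsa) heq
  refine ⟨u, huZ, fun x => ?_⟩
  by_cases hxZ : x ∈ Z
  · rw [huZ x hxZ, hZ x hxZ]
  rcases le_or_gt x l with hxl | hxl
  · refine (hpl x hxl (u x) ?_).2
    rwa [← huZ l hl, u.le_iff_le]
  rcases le_or_gt m x with hxm | hxm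
  · refine (hpm x hxm (u x) ?_).2
    rwa [← huZ m hm, u.le_iff_le]
  obtain ⟨a, ha, b, hb, hab, hZab, hcell⟩ := exists_adjacent_mem Z hxZ hl hxl hm hxm
  have hux : u x ∈ Ioo a b := (hcell _).1 ((SameCell.refl hxZ).map huZ).symm
  have hroot : ∀ r ∈ Ioo a b, p r = 0 →
      ∃ s ∈ Ioo a b, q s = 0 ∧ (x < r ↔ u x < s) ∧ (r < x ↔ s < u x) := by
    intro r hr hr0
    have hrZ : r ∉ Z := fun h => hZab r h hr
    have hur : u r = t r := hu r (Finset.mem_filter.2 ⟨hR r hr0, hr0, hrZ⟩)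
    refine ⟨u r, ?_, ?_, u.lt_iff_lt.symm, u.lt_iff_lt.symm⟩
    · have h1 := u.lt_iff_lt.2 hr.1
      have h2 := u.lt_iff_lt.2 hr.2
      rw [huZ a ha] at h1
      rw [huZ b hb] at h2
      exact ⟨h1, h2⟩
    · rw [hur]
      exact (ht r hr0 hrZ).2
  rcases hmono a b (hab.1.trans hab.2) hZab with h | h
  · exact sign_eq_of_strictMonoOn hp (hZ a ha) (hZ b hb) h.1 h.2 hab hux hroot
  · exact sign_eq_of_strictAntiOn hp (hZ a ha) (hZ b hb) h.1 h.2 hab hux hroot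

open Set in
theorem sign_eq_of_forall_ne_zero {f : ℝ → ℝ} (hf : Continuous f) {x y : ℝ}
    (h : ∀ z ∈ uIcc x y, f z ≠ 0) : SignType.sign (f x) = SignType.sign (f y) := by
  have h0 : (0 : ℝ) ∉ uIcc (f x) (f y) := fun h0 => by
    obtain ⟨z, hz, hz0⟩ := intermediate_value_uIcc hf.continuousOn h0
    exact h z hz hz0
  rw [mem_uIcc] at h0
  push Not at h0
  rcases lt_trichotomy (f x) 0 with hx | hx | hx
  · rw [sign_neg hx, sign_neg (h0.1 hx.le)]
  · exact absurd hx (h x left_mem_uIcc)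
  · rw [sign_pos hx, sign_pos (not_le.1 fun hy => (h0.2 hy).not_gt hx)]

theorem SameCell.sign_eq {Z : Finset ℝ} {x y : ℝ} (h : SameCell Z x y) {f : ℝ → ℝ}
    (hf : Continuous f) (hZ : ∀ z, f z = 0 → z ∈ Z) :
    SignType.sign (f x) = SignType.sign (f y) := by
  refine sign_eq_of_forall_ne_zero hf fun z hz hz0 => ?_
  have := h z (hZ z hz0)
  rw [Set.mem_uIcc] at hz
  grind

open Polynomial Filter in
theorem Polynomial.eventually_atTop_sign_eval (p : ℝ[X]) (hp : 0 < p.natDegree) :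
    ∀ᶠ x in atTop, SignType.sign (p.eval x) = SignType.sign p.leadingCoeff := by
  have hdeg : 0 < p.degree := natDegree_pos_iff_degree_pos.1 hp
  rcases lt_trichotomy p.leadingCoeff 0 with h | h | h
  · filter_upwards [(p.tendsto_atBot_of_leadingCoeff_nonpos hdeg h.le).eventually_lt_atBot 0]
      with x hx
    rw [sign_neg hx, sign_neg h]
  · rw [leadingCoeff_eq_zero] at h
    simp [h] at hp
  · filter_upwards [(p.tendsto_atTop_of_leadingCoeff_nonneg hdeg h.le).eventually_gt_atTop 0]
      with x hx
    rw [sign_pos hx, sign_pos h]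

open Polynomial Filter in
theorem Polynomial.eventually_atBot_sign_eval (p : ℝ[X]) (hp : 0 < p.natDegree) :
    ∀ᶠ x in atBot, SignType.sign (p.eval x) =
      SignType.sign p.leadingCoeff * SignType.sign ((-1 : ℝ) ^ p.natDegree) := by
  have hX : (-X : ℝ[X]).natDegree = 1 := by simp
  have h := (p.comp (-X)).eventually_atTop_sign_eval (by rw [natDegree_comp, hX]; omega)
  rw [leadingCoeff_comp (by rw [hX]; exact one_ne_zero), leadingCoeff_neg, leadingCoeff_X,
    sign_mul] at h
  filter_upwards [tendsto_neg_atBot_atTop.eventually h] with x hx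
  simpa using hx

open Polynomial Filter Set in
/-- An increasing bijection of the line that matches the signs of `p'` and of further polynomials
can be modified so as to match the signs of `p` too, if it does so at the roots of the others. -/
theorem exists_orderIso_sign_eval_eq {p q : ℝ[X]} (e : ℝ ≃o ℝ)
    (hdeg : p.natDegree = q.natDegree) (hpos : 0 < p.natDegree)
    (hlc : SignType.sign p.leadingCoeff = SignType.sign q.leadingCoeff)
    (G : Finset (ℝ[X] × ℝ[X]))
    (hG : ∀ g ∈ G, ∀ x, SignType.sign (g.1.eval x) = SignType.sign (g.2.eval (e x)))
    (hd : (derivative p, derivative q) ∈ G)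
    (hroot : ∀ g ∈ G, g.1 ≠ 0 → ∀ x, g.1.eval x = 0 →
      SignType.sign (p.eval x) = SignType.sign (q.eval (e x))) :
    ∃ e' : ℝ ≃o ℝ,
      (∀ g ∈ G, ∀ x, SignType.sign (g.1.eval x) = SignType.sign (g.2.eval (e' x))) ∧
      ∀ x, SignType.sign (p.eval x) = SignType.sign (q.eval (e' x)) := by
  classical
  have hp0 : p ≠ 0 := fun h => by simp [h] at hpos
  have hlc0 : p.leadingCoeff ≠ 0 := leadingCoeff_ne_zero.2 hp0
  have hd0 : derivative p ≠ 0 := fun h => hpos.ne' (derivative_eq_zero.1 h)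
  have htop : ∀ᶠ x in atTop, SignType.sign (q.eval (e x)) = SignType.sign p.leadingCoeff := by
    rw [hlc]
    exact e.tendsto_atTop.eventually (q.eventually_atTop_sign_eval (hdeg ▸ hpos))
  have hbot : ∀ᶠ x in atBot, SignType.sign (q.eval (e x)) =
      SignType.sign p.leadingCoeff * SignType.sign ((-1 : ℝ) ^ p.natDegree) := by
    rw [hlc, hdeg]
    exact e.tendsto_atBot.eventually (q.eventually_atBot_sign_eval (hdeg ▸ hpos))
  obtain ⟨m, hm⟩ := eventually_atTop.1 (htop.and (p.eventually_atTop_sign_eval hpos))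
  obtain ⟨l, hl⟩ := eventually_atBot.1 (hbot.and (p.eventually_atBot_sign_eval hpos))
  let Z : Finset ℝ := insert l (insert m (G.biUnion fun g => g.1.roots.toFinset))
  have hGZ : ∀ g ∈ G, g.1 ≠ 0 → ∀ x, g.1.eval x = 0 → x ∈ Z := by
    intro g hg hg0 x hx
    refine Finset.mem_insert_of_mem (Finset.mem_insert_of_mem (Finset.mem_biUnion.2 ⟨g, hg, ?_⟩))
    rw [Multiset.mem_toFinset, mem_roots hg0]
    exact hx
  have hqc : Continuous fun x => q.eval (e x) := q.continuous.comp e.continuous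
  obtain ⟨u, huZ, hu⟩ := exists_orderIso_sign_eq (p := fun x => p.eval x)
    (q := fun x => q.eval (e x)) p.continuous hqc Z p.roots.toFinset
    (fun x hx => by rw [Multiset.mem_toFinset, mem_roots hp0]; exact hx) (l := l) (m := m)
    (by simp [Z]) (by simp [Z])
    (by
      intro z hz
      rcases Finset.mem_insert.1 hz with rfl | hz
      · rw [(hl z le_rfl).1, (hl z le_rfl).2]
      rcases Finset.mem_insert.1 hz with rfl | hz
      · rw [(hm z le_rfl).1, (hm z le_rfl).2]
      obtain ⟨g, hg, hz⟩ := Finset.mem_biUnion.1 hz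
      rw [Multiset.mem_toFinset] at hz
      exact hroot g hg (ne_zero_of_mem_roots hz) z (isRoot_of_mem_roots hz))
    (fun x hx y hy => by
      refine ⟨fun h => ?_, by rw [(hl x hx).2, (hl y hy).1]⟩
      have := (hl x hx).2
      rw [h, sign_zero, ← sign_mul, eq_comm, sign_eq_zero_iff] at this
      exact mul_ne_zero hlc0 (pow_ne_zero _ (by norm_num)) this)
    (fun x hx y hy => by
      refine ⟨fun h => ?_, by rw [(hm x hx).2, (hm y hy).1]⟩
      have := (hm x hx).2
      rw [h, sign_zero, eq_comm, sign_eq_zero_iff] at this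
      exact hlc0 this)
    (by
      intro a b hab hZ
      have hne : ∀ x ∈ Ioo a b, (derivative p).eval x ≠ 0 := fun x hx h =>
        hZ x (hGZ _ hd hd0 x h) hx
      have hc : (a + b) / 2 ∈ Ioo a b := ⟨by linarith, by linarith⟩
      have hsgn : ∀ x ∈ Ioo a b, SignType.sign ((derivative p).eval x) =
          SignType.sign ((derivative p).eval ((a + b) / 2)) := fun x hx =>
        sign_eq_of_forall_ne_zero (f := fun x => (derivative p).eval x) (derivative p).continuous
          fun z hz => hne z (ordConnected_Ioo.uIcc_subset hx hc hz)
      have hsgn' : ∀ y ∈ Ioo (e a) (e b), SignType.sign ((derivative q).eval y) =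
          SignType.sign ((derivative p).eval ((a + b) / 2)) := by
        intro y hy
        rw [← hsgn (e.symm y) ⟨e.lt_symm_apply.2 hy.1, e.symm_apply_lt.2 hy.2⟩, hG _ hd,
          e.apply_symm_apply]
      have hmaps : MapsTo e (Icc a b) (Icc (e a) (e b)) :=
        fun x hx => ⟨e.monotone hx.1, e.monotone hx.2⟩
      rcases (hne _ hc).lt_or_gt with h | h
      · right
        rw [sign_neg h] at hsgn hsgn'
        constructor
        · refine strictAntiOn_of_deriv_neg (convex_Icc a b) p.continuous.continuousOn ?_
          intro x hx
          rw [interior_Icc] at hx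
          rw [Polynomial.deriv]
          exact sign_eq_neg_one_iff.1 (hsgn x hx)
        · have : StrictAntiOn (fun y => q.eval y) (Icc (e a) (e b)) := by
            refine strictAntiOn_of_deriv_neg (convex_Icc _ _) q.continuous.continuousOn ?_
            intro x hx
            rw [interior_Icc] at hx
            rw [Polynomial.deriv]
            exact sign_eq_neg_one_iff.1 (hsgn' x hx)
          exact this.comp_strictMonoOn (e.strictMono.strictMonoOn _) hmaps
      · left
        rw [sign_pos h] at hsgn hsgn'
        constructor
        · refine strictMonoOn_of_deriv_pos (convex_Icc a b) p.continuous.continuousOn ?_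
          intro x hx
          rw [interior_Icc] at hx
          rw [Polynomial.deriv]
          exact sign_eq_one_iff.1 (hsgn x hx)
        · have : StrictMonoOn (fun y => q.eval y) (Icc (e a) (e b)) := by
            refine strictMonoOn_of_deriv_pos (convex_Icc _ _) q.continuous.continuousOn ?_
            intro x hx
            rw [interior_Icc] at hx
            rw [Polynomial.deriv]
            exact sign_eq_one_iff.1 (hsgn' x hx)
          exact this.comp (e.strictMono.strictMonoOn _) hmaps)
  refine ⟨u.trans e, fun g hg x => ?_, hu⟩
  rw [OrderIso.trans_apply, ← hG g hg]
  by_cases hg0 : g.1 = 0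
  · simp [hg0]
  by_cases hx : x ∈ Z
  · rw [huZ x hx]
  · exact (((SameCell.refl hx).map huZ).sign_eq (f := fun x => g.1.eval x) g.1.continuous
      fun z hz => hGZ g hg hg0 z hz).symm

open Polynomial in
theorem Polynomial.exists_sign_eval_map_eq_of_root {A : Type*} [CommRing A] (f g : A[X])
    (hg : g ≠ 0) :
    ∃ r : A[X], r.degree < g.degree ∧ ∀ φ : A →+* ℝ, φ g.leadingCoeff ≠ 0 →
      ∀ x, (g.map φ).eval x = 0 →
        SignType.sign ((f.map φ).eval x) = SignType.sign ((r.map φ).eval x) := by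
  obtain ⟨k, q, r, h, hr⟩ := exists_pseudo_division f g hg
  refine ⟨C (g.leadingCoeff ^ k) * r,
    (smul_eq_C_mul (p := r) (g.leadingCoeff ^ k) ▸ degree_smul_le _ r).trans_lt hr, fun φ hφ x hx => ?_⟩
  have h' := congrArg (fun s => (s.map φ).eval x) h
  simp only [Polynomial.map_mul, Polynomial.map_add, map_C, eval_mul, eval_add, eval_C, hx,
    mul_zero, zero_add] at h' ⊢
  rw [← h', ← mul_assoc, sign_mul, sign_pos (mul_self_pos.2 ?_), one_mul]
  rw [map_pow]
  exact pow_ne_zero _ hφ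

open Polynomial in
theorem Polynomial.map_eraseLead_of_map_leadingCoeff_eq_zero {A B : Type*} [CommRing A]
    [CommRing B] (φ : A →+* B) {g : A[X]} (h : φ g.leadingCoeff = 0) :
    g.eraseLead.map φ = g.map φ := by
  conv_rhs => rw [← eraseLead_add_C_mul_X_pow g, Polynomial.map_add, Polynomial.map_mul, map_C, h]
  rw [C_0, zero_mul, add_zero]

open Polynomial in
theorem Polynomial.map_leadingCoeff_derivative_ne_zero {A : Type*} [CommRing A]
    (φ : A →+* ℝ) {f : A[X]} (hf : f.natDegree ≠ 0) (h : φ f.leadingCoeff ≠ 0) :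
    φ (derivative f).leadingCoeff ≠ 0 := by
  have hc : φ ((derivative f).coeff (f.natDegree - 1)) ≠ 0 := by
    rw [coeff_derivative, Nat.sub_add_cancel (Nat.one_le_iff_ne_zero.2 hf), map_mul]
    refine mul_ne_zero h ?_
    simp only [map_add, map_natCast, map_one]
    positivity
  have : (derivative f).natDegree = f.natDegree - 1 :=
    natDegree_eq_of_le_of_coeff_ne_zero (natDegree_derivative_le f) fun h0 => hc (by simp [h0])
  rwa [leadingCoeff, this]

open Polynomial in
/-- The arrangement on the line of the signs of finitely many polynomials with parameters is
determined by the signs of finitely many elements of the ring of parameters. -/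
theorem exists_finset_orderIso_sign_eval_eq {A : Type*} [CommRing A] (F : Multiset A[X]) :
    ∃ P : Finset A, ∀ φ ψ : A →+* ℝ, (∀ a ∈ P, SignType.sign (φ a) = SignType.sign (ψ a)) →
      ∃ e : ℝ ≃o ℝ, ∀ f ∈ F, ∀ x,
        SignType.sign ((f.map φ).eval x) = SignType.sign ((f.map ψ).eval (e x)) := by
  classical
  have wf : WellFounded (Multiset.IsDershowitzMannaLT (α := WithBot ℕ)) :=
    Multiset.wellFounded_isDershowitzMannaLT
  generalize hM : F.map degree = M
  induction M using wf.induction generalizing F with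
  | _ M ih =>
  subst hM
  have ih' : ∀ (X Y Z : Multiset A[X]), Z ≠ 0 → F = X + Z →
      (∀ y ∈ Y, ∃ z ∈ Z, y.degree < z.degree) →
      ∃ P : Finset A, ∀ φ ψ : A →+* ℝ, (∀ a ∈ P, SignType.sign (φ a) = SignType.sign (ψ a)) →
      ∃ e : ℝ ≃o ℝ, ∀ f ∈ X + Y, ∀ x,
        SignType.sign ((f.map φ).eval x) = SignType.sign ((f.map ψ).eval (e x)) := by
    intro X Y Z hZ hF hYZ
    refine ih _ ⟨X.map degree, Y.map degree, Z.map degree, ?_, ?_, ?_, ?_⟩ (X + Y) rfl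
    · simpa using hZ
    · simp
    · simp [hF]
    · intro y hy
      obtain ⟨w, hw, rfl⟩ := Multiset.mem_map.1 hy
      obtain ⟨z, hz, h⟩ := hYZ w hw
      exact ⟨_, Multiset.mem_map_of_mem _ hz, h⟩
  by_cases h0 : (0 : A[X]) ∈ F
  · obtain ⟨P, hP⟩ := ih' (F.erase 0) 0 {0} (by simp)
      (by rw [Multiset.add_comm, Multiset.singleton_add, Multiset.cons_erase h0]) (by simp)
    refine ⟨P, fun φ ψ h => ?_⟩
    obtain ⟨e, he⟩ := hP φ ψ h
    refine ⟨e, fun f hf x => ?_⟩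
    rw [← Multiset.cons_erase h0, Multiset.mem_cons] at hf
    rcases hf with rfl | hf
    · simp
    · exact he f (by simpa using hf) x
  have hne : ∀ g ∈ F, g ≠ 0 := fun g hg h => h0 (h ▸ hg)
  rcases F.empty_or_exists_mem with rfl | ⟨f₀, hf₀⟩
  · exact ⟨∅, fun _ _ _ => ⟨OrderIso.refl ℝ, by simp⟩⟩
  obtain ⟨f, hfF, hmax⟩ := F.toFinset.exists_max_image degree ⟨f₀, by simpa using hf₀⟩
  rw [Multiset.mem_toFinset] at hfF
  simp only [Multiset.mem_toFinset] at hmax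
  obtain ⟨F₀, rfl⟩ := Multiset.exists_cons_of_mem hfF
  have hf0 := hne f hfF
  have hrem : ∀ g : A[X], ∃ r : A[X], (g.degree ≤ f.degree → r.degree < f.degree) ∧
      (g ≠ 0 → ∀ φ : A →+* ℝ, φ g.leadingCoeff ≠ 0 → ∀ x, (g.map φ).eval x = 0 →
        SignType.sign ((f.map φ).eval x) = SignType.sign ((r.map φ).eval x)) := by
    intro g
    by_cases hg : g = 0
    · exact ⟨0, fun _ => by simpa [bot_lt_iff_ne_bot] using hf0, fun h => absurd hg h⟩
    · obtain ⟨r, hr, h⟩ := exists_sign_eval_map_eq_of_root f g hg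
      exact ⟨r, hr.trans_le, fun _ => h⟩
  choose rem hrem_deg hrem using hrem
  obtain ⟨P₁, hP₁⟩ := ih' F₀ (derivative f ::ₘ (derivative f ::ₘ F₀).map rem) {f} (by simp)
    (by rw [Multiset.add_comm, Multiset.singleton_add]) <| by
      intro y hy
      refine ⟨f, Multiset.mem_singleton_self f, ?_⟩
      rcases Multiset.mem_cons.1 hy with rfl | hy
      · exact degree_derivative_lt hf0
      obtain ⟨g, hg, rfl⟩ := Multiset.mem_map.1 hy
      refine hrem_deg g ?_
      rcases Multiset.mem_cons.1 hg with rfl | hg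
      · exact (degree_derivative_lt hf0).le
      · exact hmax g (Multiset.mem_cons_of_mem hg)
  have herase : ∀ g, ∃ P : Finset A, g ∈ f ::ₘ F₀ → ∀ φ ψ : A →+* ℝ,
      (∀ a ∈ P, SignType.sign (φ a) = SignType.sign (ψ a)) →
      ∃ e : ℝ ≃o ℝ, ∀ h ∈ (f ::ₘ F₀).erase g + {g.eraseLead}, ∀ x,
        SignType.sign ((h.map φ).eval x) = SignType.sign ((h.map ψ).eval (e x)) := by
    intro g
    by_cases hg : g ∈ f ::ₘ F₀
    · obtain ⟨P, hP⟩ := ih' ((f ::ₘ F₀).erase g) {g.eraseLead} {g} (by simp)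
        (by rw [Multiset.add_comm, Multiset.singleton_add, Multiset.cons_erase hg])
        (by simpa using degree_eraseLead_lt (hne g hg))
      exact ⟨P, fun _ => hP⟩
    · exact ⟨∅, fun h => absurd h hg⟩
  choose P₂ hP₂ using herase
  refine ⟨P₁ ∪ ((f ::ₘ F₀).toFinset.biUnion P₂ ∪ (f ::ₘ F₀).toFinset.image leadingCoeff),
    fun φ ψ hφψ => ?_⟩
  have hlc : ∀ g ∈ f ::ₘ F₀,
      SignType.sign (φ g.leadingCoeff) = SignType.sign (ψ g.leadingCoeff) := fun g hg =>
    hφψ _ (Finset.mem_union_right _ (Finset.mem_union_right _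
      (Finset.mem_image_of_mem _ (Multiset.mem_toFinset.2 hg))))
  by_cases hdeg : ∃ g ∈ f ::ₘ F₀, φ g.leadingCoeff = 0
  · obtain ⟨g, hg, hφ⟩ := hdeg
    have hψ : ψ g.leadingCoeff = 0 := by
      rw [← sign_eq_zero_iff, ← hlc g hg, hφ, sign_zero]
    obtain ⟨e, he⟩ := hP₂ g hg φ ψ fun a ha => hφψ a (Finset.mem_union_right _
      (Finset.mem_union_left _ (Finset.mem_biUnion.2 ⟨g, Multiset.mem_toFinset.2 hg, ha⟩)))
    refine ⟨e, fun h hh x => ?_⟩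
    rw [← Multiset.cons_erase hg, Multiset.mem_cons] at hh
    rcases hh with rfl | hh
    · rw [← map_eraseLead_of_map_leadingCoeff_eq_zero φ hφ,
        ← map_eraseLead_of_map_leadingCoeff_eq_zero ψ hψ]
      exact he _ (by simp) x
    · exact he h (Multiset.mem_add.2 (.inl hh)) x
  push Not at hdeg
  have hdeg' : ∀ g ∈ f ::ₘ F₀, ψ g.leadingCoeff ≠ 0 := fun g hg h => hdeg g hg <| by
    rw [← sign_eq_zero_iff, hlc g hg, h, sign_zero]
  obtain ⟨e, he⟩ := hP₁ φ ψ fun a ha => hφψ a (Finset.mem_union_left _ ha)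
  by_cases hconst : f.natDegree = 0
  · refine ⟨e, fun h hh x => ?_⟩
    rcases Multiset.mem_cons.1 hh with rfl | hh
    · have := hlc h hfF
      rw [eq_C_of_natDegree_eq_zero hconst] at this ⊢
      simpa using this
    · exact he h (Multiset.mem_add.2 (.inl hh)) x
  have hdφ := natDegree_map_of_leadingCoeff_ne_zero φ (hdeg f hfF)
  have hdψ := natDegree_map_of_leadingCoeff_ne_zero ψ (hdeg' f hfF)
  have hφ_lc : ∀ g ∈ derivative f ::ₘ F₀, φ g.leadingCoeff ≠ 0 := by
    intro g hg
    rcases Multiset.mem_cons.1 hg with rfl | hg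
    · exact map_leadingCoeff_derivative_ne_zero φ hconst (hdeg f hfF)
    · exact hdeg g (Multiset.mem_cons_of_mem hg)
  obtain ⟨e', he', hf⟩ := exists_orderIso_sign_eval_eq (p := f.map φ) (q := f.map ψ) e
    (by rw [hdφ, hdψ]) (by rw [hdφ]; omega)
    (by
      rw [leadingCoeff_map_of_leadingCoeff_ne_zero φ (hdeg f hfF),
        leadingCoeff_map_of_leadingCoeff_ne_zero ψ (hdeg' f hfF)]
      exact hlc f hfF)
    ((derivative f ::ₘ F₀).toFinset.image fun g => (g.map φ, g.map ψ))
    (by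
      intro G hG x
      obtain ⟨g, hg, rfl⟩ := Finset.mem_image.1 hG
      rw [Multiset.mem_toFinset] at hg
      refine he g ?_ x
      rcases Multiset.mem_cons.1 hg with rfl | hg
      · simp
      · exact Multiset.mem_add.2 (.inl hg))
    (by
      rw [derivative_map, derivative_map]
      exact Finset.mem_image_of_mem (fun g : A[X] => (g.map φ, g.map ψ)) (by simp))
    (by
      intro G hG _ x hx
      obtain ⟨g, hg, rfl⟩ := Finset.mem_image.1 hG
      rw [Multiset.mem_toFinset] at hg
      have hg_lc := hφ_lc g hg
      have hg0 : g ≠ 0 := fun h => hg_lc (by simp [h])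
      have hmem : ∀ h ∈ derivative f ::ₘ F₀,
          h ∈ F₀ + derivative f ::ₘ (derivative f ::ₘ F₀).map rem := by
        intro h hh
        rcases Multiset.mem_cons.1 hh with rfl | hh
        · simp
        · exact Multiset.mem_add.2 (.inl hh)
      have hg_lc' : ψ g.leadingCoeff ≠ 0 := by
        rcases Multiset.mem_cons.1 hg with rfl | hg
        · exact map_leadingCoeff_derivative_ne_zero ψ hconst (hdeg' f hfF)
        · exact hdeg' g (Multiset.mem_cons_of_mem hg)
      have hx' : (g.map ψ).eval (e x) = 0 := by
        rw [← sign_eq_zero_iff, ← he g (hmem g hg), hx, sign_zero]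
      rw [hrem g hg0 φ hg_lc x hx, hrem g hg0 ψ hg_lc' _ hx']
      exact he _ (Multiset.mem_add.2
        (.inr (Multiset.mem_cons_of_mem (Multiset.mem_map_of_mem _ hg)))) x)
  refine ⟨e', fun h hh x => ?_⟩
  rcases Multiset.mem_cons.1 hh with rfl | hh
  · exact hf x
  · exact he' _ (Finset.mem_image_of_mem (fun g : A[X] => (g.map φ, g.map ψ))
      (Multiset.mem_toFinset.2 (Multiset.mem_cons_of_mem hh))) x

open Polynomial in
theorem exists_finset_forall_exists_sign_eval_eq {A : Type*} [CommRing A] (F : Multiset A[X][X]) :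
    ∃ P : Finset A, ∀ φ ψ : A →+* ℝ, (∀ a ∈ P, SignType.sign (φ a) = SignType.sign (ψ a)) →
      ∀ x y : ℝ, ∃ x' y' : ℝ, ∀ f ∈ F,
        SignType.sign (eval₂RingHom (eval₂RingHom φ x) y f) =
          SignType.sign (eval₂RingHom (eval₂RingHom ψ x') y' f) := by
  obtain ⟨P₁, hP₁⟩ := exists_finset_orderIso_sign_eval_eq F
  obtain ⟨P, hP⟩ := exists_finset_orderIso_sign_eval_eq P₁.val
  refine ⟨P, fun φ ψ h x y => ?_⟩
  obtain ⟨e, he⟩ := hP φ ψ h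
  obtain ⟨e₁, he₁⟩ := hP₁ (eval₂RingHom φ x) (eval₂RingHom ψ (e x)) fun a ha => by
    simpa [eval_map] using he a ha x
  exact ⟨e x, e₁ y, fun f hf => by
    simpa only [eval_map, coe_eval₂RingHom] using he₁ f hf y⟩

open Polynomial Filter in
theorem Polynomial.eventually_le_abs_eval {c : ℝ[X]} (hc : c ≠ 0) :
    ∃ ε > 0, ∀ᶠ x in atTop, ε ≤ |c.eval x| := by
  by_cases hdeg : 0 < c.degree
  · exact ⟨1, one_pos, (abs_tendsto_atTop c hdeg).eventually_ge_atTop 1⟩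
  · rw [eq_C_of_degree_le_zero (not_lt.1 hdeg)] at hc ⊢
    refine ⟨_, abs_pos.2 (C_ne_zero.1 hc), .of_forall fun x => ?_⟩
    rw [eval_C]

open Polynomial Filter in
theorem Polynomial.eventually_abs_eval_le_pow (c : ℝ[X]) :
    ∃ m : ℕ, ∀ᶠ x in atTop, |c.eval x| ≤ x ^ m := by
  refine ⟨c.natDegree + 1, ?_⟩
  have h : c.degree < (X ^ (c.natDegree + 1) : ℝ[X]).degree := by
    rw [degree_X_pow]
    exact degree_le_natDegree.trans_lt (by exact_mod_cast Nat.lt_succ_self _)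
  filter_upwards [(isLittleO_atTop_of_degree_lt c _ h).bound one_pos, eventually_ge_atTop 0]
    with x hx hx0
  simpa [abs_of_nonneg hx0] using hx

open Polynomial Filter in
theorem Polynomial.eventually_le_abs_evalEval {p : ℝ[X][X]} (hp : p ≠ 0) :
    ∃ ε > 0, ∃ K : ℕ, ∀ᶠ x in atTop, ∀ y, x ^ K ≤ y → ε ≤ |p.evalEval x y| := by
  induction hn : p.natDegree using Nat.strong_induction_on generalizing p with
  | _ n ih =>
  subst hn
  by_cases hX : p.divX = 0
  · rw [divX_eq_zero_iff] at hX
    rw [hX] at hp ⊢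
    obtain ⟨ε, hε, h⟩ := eventually_le_abs_eval (C_ne_zero.1 hp)
    refine ⟨ε, hε, 0, h.mono fun x hx y _ => ?_⟩
    rwa [evalEval_C]
  have hpos : 0 < p.natDegree := by
    by_contra! h
    exact hX (divX_eq_zero_iff.2 (eq_C_of_natDegree_le_zero h))
  obtain ⟨ε, hε, K, h⟩ := ih p.divX.natDegree
    (by rw [natDegree_divX_eq_natDegree_tsub_one]; omega) hX rfl
  obtain ⟨m, hm⟩ := eventually_abs_eval_le_pow (p.coeff 0)
  refine ⟨1, one_pos, max K (m + 1), ?_⟩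
  filter_upwards [h, hm, eventually_ge_atTop 1, eventually_ge_atTop (2 / ε)]
    with x hx hxm hx1 hxε y hy
  have hyK : x ^ K ≤ y := (pow_le_pow_right₀ hx1 (le_max_left _ _)).trans hy
  have hym : x ^ (m + 1) ≤ y := (pow_le_pow_right₀ hx1 (le_max_right _ _)).trans hy
  have hy0 : 0 ≤ y := (pow_nonneg (zero_le_one.trans hx1) _).trans hyK
  have heq : p.evalEval x y = p.divX.evalEval x y * y + (p.coeff 0).eval x := by
    conv_lhs => rw [← divX_mul_X_add p]
    rw [evalEval_add, evalEval_mul, evalEval_X, evalEval_C]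
  have h1 : 2 * x ^ m ≤ |p.divX.evalEval x y * y| := by
    rw [abs_mul, abs_of_nonneg hy0]
    rw [div_le_iff₀ hε] at hxε
    calc 2 * x ^ m ≤ (x * ε) * x ^ m := by gcongr
      _ = ε * x ^ (m + 1) := by ring
      _ ≤ _ := mul_le_mul (hx y hyK) hym (by positivity) (abs_nonneg _)
  have h2 : 1 ≤ x ^ m := one_le_pow₀ hx1
  rw [heq]
  have h3 := abs_sub_abs_le_abs_sub (p.divX.evalEval x y * y) (-(p.coeff 0).eval x)
  rw [sub_neg_eq_add, abs_neg] at h3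
  linarith

open Polynomial Filter in
theorem Polynomial.eventually_sign_evalEval_eq (p : ℝ[X][X]) :
    ∃ K : ℕ, ∀ᶠ x in atTop, ∀ y y', x ^ K ≤ y → x ^ K ≤ y' →
      SignType.sign (p.evalEval x y) = SignType.sign (p.evalEval x y') := by
  by_cases hp : p = 0
  · exact ⟨0, .of_forall fun x y y' _ _ => by simp [hp]⟩
  obtain ⟨ε, hε, K, h⟩ := eventually_le_abs_evalEval hp
  refine ⟨K, h.mono fun x hx y y' hy hy' => ?_⟩
  refine sign_eq_of_forall_ne_zero (f := fun y => p.evalEval x y) ?_ fun z hz => ?_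
  · simp only [← map_evalRingHom_eval]
    exact (p.map (evalRingHom x)).continuous
  · exact abs_pos.1 (hε.trans_le (hx z ((le_min hy hy').trans hz.1)))

open Polynomial Filter in
theorem Polynomial.eventually_forall_sign_evalEval_eq (P : Finset ℝ[X][X]) :
    ∃ K : ℕ, ∀ᶠ x in atTop, ∀ y y', x ^ K ≤ y → x ^ K ≤ y' →
      ∀ p ∈ P, SignType.sign (p.evalEval x y) = SignType.sign (p.evalEval x y') := by
  choose K hK using eventually_sign_evalEval_eq
  refine ⟨P.sup K, ?_⟩
  filter_upwards [(eventually_all_finset P).2 fun p _ => hK p, eventually_ge_atTop 1]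
    with x hx hx1 y y' hy hy' p hp
  have h := pow_le_pow_right₀ hx1 (Finset.le_sup (f := K) hp)
  exact hx p hp y y' (h.trans hy) (h.trans hy')

theorem Real.sign_eq_of_signType_sign_eq {a b : ℝ} (h : SignType.sign a = SignType.sign b) :
    Real.sign a = Real.sign b := by
  rcases lt_trichotomy a 0 with ha | rfl | ha
  · rw [_root_.sign_neg ha, eq_comm, sign_eq_neg_one_iff] at h
    rw [Real.sign_of_neg ha, Real.sign_of_neg h]
  · rw [_root_.sign_zero, eq_comm, _root_.sign_eq_zero_iff] at h
    rw [h]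
  · rw [_root_.sign_pos ha, eq_comm, sign_eq_one_iff] at h
    rw [Real.sign_of_pos ha, Real.sign_of_pos h]

theorem div_le_iff_sub_mul_nonpos {a b c : ℝ} (hb : b ≠ 0) : a / b ≤ c ↔ (a - c * b) * b ≤ 0 := by
  have h : (a - c * b) * b = (a / b - c) * b ^ 2 := by field_simp
  rw [h, ← sub_nonpos, ← not_lt, ← not_lt, mul_pos_iff_of_pos_right (by positivity)]

theorem le_div_iff_sub_mul_nonneg {a b c : ℝ} (hb : b ≠ 0) : c ≤ a / b ↔ 0 ≤ (a - c * b) * b := by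
  have h : (a - c * b) * b = (a / b - c) * b ^ 2 := by field_simp
  rw [h, mul_nonneg_iff_of_pos_right (by positivity), sub_nonneg]

open Polynomial in
/-- Regards a polynomial in two variables as an iterated polynomial over a ring of parameters. -/
noncomputable def paramEmbedding (A : Type*) [CommRing A] [Algebra ℝ A] :
    MvPolynomial (Fin 2) ℝ →+* A[X][X] :=
  MvPolynomial.eval₂Hom ((C.comp C).comp (algebraMap ℝ A)) ![C X, X]

open Polynomial in
theorem eval_paramEmbedding {A : Type*} [CommRing A] [Algebra ℝ A] (φ : A →ₐ[ℝ] ℝ) (x y : ℝ)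
    (p : MvPolynomial (Fin 2) ℝ) :
    eval₂RingHom (eval₂RingHom (φ : A →+* ℝ) x) y (paramEmbedding A p) =
      MvPolynomial.eval ![x, y] p := by
  rw [← RingHom.comp_apply]
  congr 1
  refine MvPolynomial.ringHom_ext (fun r => ?_) fun i => ?_
  · simp [paramEmbedding]
  · fin_cases i <;> simp [paramEmbedding]

open Polynomial in
/-- The truth value of `Xi` depends only on the signs of finitely many polynomials in `L`, `H`. -/
theorem exists_finset_forall_Xi (Q : Finset (MvPolynomial (Fin 2) ℝ))
    (σ : MvPolynomial (Fin 2) ℝ → ℝ)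
    (D G : Finset (MvPolynomial (Fin 2) ℝ × MvPolynomial (Fin 2) ℝ))
    (hDG : ∀ pp ∈ D ∪ G, pp.2 ∈ Q ∧ σ pp.2 ≠ 0) :
    ∃ P : Finset ℝ[X][X], ∀ L H L' H',
      (∀ p ∈ P, SignType.sign (p.evalEval L H) = SignType.sign (p.evalEval L' H')) →
      Xi Q σ D G L H → Xi Q σ D G L' H' := by
  let ι := paramEmbedding ℝ[X][X]
  let rel : ℝ[X][X] → MvPolynomial (Fin 2) ℝ × MvPolynomial (Fin 2) ℝ → ℝ[X][X][X][X] :=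
    fun c pp => (ι pp.1 + C (C (-c)) * ι pp.2) * ι pp.2
  obtain ⟨P, hP⟩ := exists_finset_forall_exists_sign_eval_eq
    (Q.val.map ι + (D.val.map (rel (C X)) + G.val.map (rel X)))
  refine ⟨P, fun L H L' H' hLH ⟨x, y, hQ, hD, hG⟩ => ?_⟩
  let φ : ℝ → ℝ → ℝ[X][X] →ₐ[ℝ] ℝ := fun L H =>
    { evalEvalRingHom L H with commutes' := fun r => by simp [Polynomial.algebraMap_apply] }
  have hι : ∀ L H x y p, eval₂RingHom (eval₂RingHom (φ L H : ℝ[X][X] →+* ℝ) x) y (ι p) =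
      MvPolynomial.eval ![x, y] p := fun L H x y p => eval_paramEmbedding (φ L H) x y p
  have hrel : ∀ L H x y c pp,
      eval₂RingHom (eval₂RingHom (φ L H : ℝ[X][X] →+* ℝ) x) y (rel c pp) =
      (MvPolynomial.eval ![x, y] pp.1 - c.evalEval L H * MvPolynomial.eval ![x, y] pp.2) *
        MvPolynomial.eval ![x, y] pp.2 := by
    intro L H x y c pp
    have hc : eval₂RingHom (eval₂RingHom (φ L H : ℝ[X][X] →+* ℝ) x) y (C (C (-c))) =
        -c.evalEval L H := by simp [φ]
    rw [RingHom.map_mul, RingHom.map_add, RingHom.map_mul, hι, hι, hc, neg_mul, ← sub_eq_add_neg]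
  obtain ⟨x', y', h⟩ := hP (φ L H) (φ L' H') hLH x y
  have hQ' : ∀ q ∈ Q, Real.sign (MvPolynomial.eval ![x', y'] q) = σ q := by
    intro q hq
    have := h (ι q) (Multiset.mem_add.2 (.inl (Multiset.mem_map_of_mem _ hq)))
    rw [hι, hι] at this
    rw [← Real.sign_eq_of_signType_sign_eq this, hQ q hq]
  have hne : ∀ x y, (∀ q ∈ Q, Real.sign (MvPolynomial.eval ![x, y] q) = σ q) →
      ∀ pp ∈ D ∪ G, MvPolynomial.eval ![x, y] pp.2 ≠ 0 := by
    intro x y hQ pp hpp h0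
    have := hQ _ (hDG pp hpp).1
    rw [h0, Real.sign_zero] at this
    exact (hDG pp hpp).2 this.symm
  refine ⟨x', y', hQ', fun pp hpp => ?_, fun pp hpp => ?_⟩
  · have := h (rel (C X) pp) (Multiset.mem_add.2 (.inr (Multiset.mem_add.2
      (.inl (Multiset.mem_map_of_mem _ hpp)))))
    rw [hrel, hrel, evalEval_C, evalEval_C, eval_X, eval_X] at this
    have hmem := Finset.mem_union_left G hpp
    rw [div_le_iff_sub_mul_nonpos (hne _ _ hQ' pp hmem), ← sign_nonpos_iff, ← this,
      sign_nonpos_iff, ← div_le_iff_sub_mul_nonpos (hne _ _ hQ pp hmem)]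
    exact hD pp hpp
  · have := h (rel X pp) (Multiset.mem_add.2 (.inr (Multiset.mem_add.2
      (.inr (Multiset.mem_map_of_mem _ hpp)))))
    rw [hrel, hrel, evalEval_X, evalEval_X] at this
    have hmem := Finset.mem_union_right D hpp
    rw [le_div_iff_sub_mul_nonneg (hne _ _ hQ' pp hmem), ← sign_nonneg_iff, ← this,
      sign_nonneg_iff, ← le_div_iff_sub_mul_nonneg (hne _ _ hQ pp hmem)]
    exact hG pp hpp

theorem Xi.anti_right {Q : Finset (MvPolynomial (Fin 2) ℝ)} {σ : MvPolynomial (Fin 2) ℝ → ℝ}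
    {D G : Finset (MvPolynomial (Fin 2) ℝ × MvPolynomial (Fin 2) ℝ)} {L H H' : ℝ}
    (h : Xi Q σ D G L H) (hH : H' ≤ H) : Xi Q σ D G L H' := by
  obtain ⟨x, y, hQ, hD, hG⟩ := h
  exact ⟨x, y, hQ, hD, fun pp hpp => hH.trans (hG pp hpp)⟩

/-- with `Q`, `σ`, `D`, `G` as described (all numerator/denominator pairs
taken from `Q`, denominators with nonzero prescribed sign), the formula
`Ψ : ∀ n ∀ R ≥ 2, ∃ L H, L ≥ R ∧ H ≥ L^(R^(n+2)) ∧ Ξ(L,H)` is equivalent to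
`Ψ* : ∀ R ≥ 2, ∃ L ≥ R, ∀ H, Ξ(L,H)`. -/
theorem stmt12 (Q : Finset (MvPolynomial (Fin 2) ℝ)) (σ : MvPolynomial (Fin 2) ℝ → ℝ)
    (hσ : ∀ q ∈ Q, σ q = -1 ∨ σ q = 0 ∨ σ q = 1)
    (D G : Finset (MvPolynomial (Fin 2) ℝ × MvPolynomial (Fin 2) ℝ))
    (hDG : ∀ pp ∈ D ∪ G, pp.1 ∈ Q ∧ pp.2 ∈ Q ∧ σ pp.2 ≠ 0) :
    ((∀ n : ℕ, ∀ R : ℝ, 2 ≤ R → ∃ L H : ℝ,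
        R ≤ L ∧ L ^ (R ^ ((n : ℝ) + 2)) ≤ H ∧ Xi Q σ D G L H) ↔
     (∀ R : ℝ, 2 ≤ R → ∃ L : ℝ, R ≤ L ∧ ∀ H : ℝ, Xi Q σ D G L H)) := by
  constructor
  · intro h R hR
    obtain ⟨P, hP⟩ := exists_finset_forall_Xi Q σ D G fun pp hpp => (hDG pp hpp).2
    obtain ⟨K, hK⟩ := Polynomial.eventually_forall_sign_evalEval_eq P
    obtain ⟨N, hN⟩ := Filter.eventually_atTop.1 hK
    obtain ⟨L, H, hL, hH, hXi⟩ := h 0 (max R (max N K)) (hR.trans (le_max_left _ _))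
    have hR' : R ≤ L := (le_max_left _ _).trans hL
    have hN' : N ≤ L := ((le_max_left _ _).trans (le_max_right _ _)).trans hL
    have hL1 : 1 ≤ L := by linarith
    have hpow : L ^ K ≤ H := by
      refine le_trans ?_ hH
      rw [← Real.rpow_natCast]
      refine Real.rpow_le_rpow_of_exponent_le hL1 ?_
      have h2 : 1 ≤ max R (max N K) := by linarith [le_max_left R (max N K)]
      calc (K : ℝ) ≤ max R (max N K) := (le_max_right _ _).trans (le_max_right _ _)
        _ ≤ _ := Real.self_le_rpow_of_one_le h2 (by norm_num)
    refine ⟨L, hR', fun H' => ?_⟩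
    have hmax : Xi Q σ D G L (max H H') :=
      hP L H L _ (hN L hN' H _ hpow (hpow.trans (le_max_left _ _))) hXi
    exact hmax.anti_right (le_max_right _ _)
  · intro h n R hR
    obtain ⟨L, hL, hXi⟩ := h R hR
    exact ⟨L, _, hL, le_rfl, hXi _⟩
end

section
/- Diagonal effective compactness: for all positive integers d, D, k there exists N such that for all finite sets P and Q of real polynomials in the d·k coordinates of k points of ℝ^d, each polynomial of total degree at most D, the following holds for the predicate Φ(x₁,…,x_k) := (∀p ∈ P, p(x₁,…,x_k) = 0) ∧ (∀q ∈ Q, q(x₁,…,x_k) > 0): if there exists a set A ⊆ ℝ^d of cardinality N such that Φ(a₁,…,a_k) holds for every k-tuple (a₁,…,a_k) ∈ A^k, then there exists an infinite set X ⊆ ℝ^d such that Φ(x₁,…,x_k) holds for every (x₁,…,x_k) ∈ X^k. -/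
namespace MvPolynomial

theorem eval_aeval {σ τ : Type*} (x : τ → ℝ) (g : σ → MvPolynomial τ ℝ) (p : MvPolynomial σ ℝ) :
    eval x (aeval g p) = eval (fun i => eval x (g i)) p := by
  induction p using MvPolynomial.induction_on with
  | C b => simp
  | add p q hp hq => simp only [map_add, hp, hq]
  | mul_X p i hp => simp only [map_mul, hp, aeval_X, eval_X]

theorem totalDegree_aeval_le {σ τ : Type*} (p : MvPolynomial σ ℝ) (g : σ → MvPolynomial τ ℝ)
    {E : ℕ} (hg : ∀ i, (g i).totalDegree ≤ E) :
    (aeval g p).totalDegree ≤ p.totalDegree * E := by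
  rw [aeval_def, eval₂_eq]
  refine totalDegree_finsetSum_le fun s hs => ?_
  refine (totalDegree_mul _ _).trans ?_
  rw [algebraMap_eq, totalDegree_C, zero_add]
  refine (totalDegree_finsetProd _ _).trans ?_
  calc ∑ i ∈ s.support, (g i ^ s i).totalDegree ≤ ∑ i ∈ s.support, s i * E :=
        Finset.sum_le_sum fun i _ => (totalDegree_pow _ _).trans (Nat.mul_le_mul_left _ (hg i))
    _ = (s.sum fun _ e => e) * E := by rw [Finsupp.sum, Finset.sum_mul]
    _ ≤ p.totalDegree * E := Nat.mul_le_mul_right _ (le_totalDegree hs)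

theorem totalDegree_pderiv_le {σ : Type*} (p : MvPolynomial σ ℝ) (i : σ) :
    (pderiv i p).totalDegree ≤ p.totalDegree := by
  refine Finset.sup_le fun s hs => ?_
  rw [mem_support_iff, coeff_pderiv] at hs
  refine le_trans ?_ (le_totalDegree (mem_support_iff.2 (left_ne_zero_of_mul hs)))
  rw [Finsupp.sum_add_index' (fun _ => rfl) (fun _ _ _ => rfl)]
  exact Nat.le_add_right _ _

theorem hasDerivAt_eval_update {σ : Type*} [DecidableEq σ] (p : MvPolynomial σ ℝ) (x : σ → ℝ)
    (i : σ) (t : ℝ) :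
    HasDerivAt (fun t => eval (Function.update x i t) p)
      (eval (Function.update x i t) (pderiv i p)) t := by
  induction p using MvPolynomial.induction_on with
  | C a => simpa using hasDerivAt_const t a
  | add p q hp hq =>
    simp only [map_add]
    exact hp.add hq
  | mul_X p j hp =>
    have hX : HasDerivAt (fun t => eval (Function.update x i t) (X j))
        (eval (Function.update x i t) (pderiv i (X j))) t := by
      rcases eq_or_ne j i with rfl | hji
      · simpa using hasDerivAt_id' t
      · simpa [pderiv_X_of_ne hji, hji] using hasDerivAt_const t (x j)
    rw [pderiv_mul]
    simp only [map_mul, map_add]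
    exact hp.mul hX

theorem eval_pderiv_eq_zero_of_isLocalMin {σ : Type*} (p : MvPolynomial σ ℝ)
    {x : σ → ℝ} (hx : IsLocalMin (fun y => eval y p) x) (i : σ) :
    eval x (pderiv i p) = 0 := by
  classical
  have hd := hasDerivAt_eval_update p x i (x i)
  rw [Function.update_eq_self] at hd
  refine IsLocalMin.hasDerivAt_eq_zero ?_ hd
  have ht : Filter.Tendsto (fun t => Function.update x i t) (nhds (x i)) (nhds x) := by
    have := (continuous_const.update i continuous_id : Continuous fun t => Function.update x i t)
    simpa using this.tendsto (x i)
  filter_upwards [ht.eventually hx] with t h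
  simpa using h

theorem exists_linear_relation {ι : Type*} [Fintype ι] {d B : ℕ}
    (v : ι → MvPolynomial (Fin d) ℝ) (hv : ∀ i, (v i).totalDegree ≤ B)
    (hcard : (B + 1) ^ d < Fintype.card ι) :
    ∃ u : ι → ℝ, u ≠ 0 ∧ ∑ i, u i • v i = 0 := by
  let L : (ι → ℝ) →ₗ[ℝ] ((Fin d → Fin (B + 1)) → ℝ) :=
    (LinearMap.pi fun β => lcoeff ℝ (Finsupp.equivFunOnFinite.symm fun i => (β i : ℕ))) ∘ₗ
      Fintype.linearCombination ℝ v
  have hL : LinearMap.ker L ≠ ⊥ := L.ker_ne_bot_of_finrank_lt (by simpa using hcard)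
  obtain ⟨u, hu, hu0⟩ := (Submodule.ne_bot_iff _).1 hL
  refine ⟨u, hu0, ?_⟩
  have hdeg : (∑ i, u i • v i).totalDegree ≤ B :=
    totalDegree_finsetSum_le fun i _ => (totalDegree_smul_le _ _).trans (hv i)
  ext s
  rw [coeff_zero]
  by_contra hs
  have hsB (i : Fin d) : s i < B + 1 := by
    refine Nat.lt_succ_of_le (le_trans ?_ hdeg)
    refine le_trans ?_ (le_totalDegree (mem_support_iff.2 hs))
    by_cases hi : i ∈ s.support
    · exact Finset.single_le_sum (f := fun i => s i) (fun _ _ => Nat.zero_le _) hi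
    · simp [Finsupp.notMem_support_iff.1 hi]
  have h := congrFun (LinearMap.mem_ker.1 hu) fun i => ⟨s i, hsB i⟩
  apply hs
  simpa [L, Fintype.linearCombination_apply, Finsupp.equivFunOnFinite_symm_coe, coeff_sum] using h

/-- `d + 1` polynomials in `d` variables are algebraically dependent, by a relation whose degree
in the last polynomial is bounded in terms of the degrees of the polynomials. -/
theorem exists_algebraic_relation (d E : ℕ) :
    ∃ M : ℕ, ∀ (g : Fin d → MvPolynomial (Fin d) ℝ) (h : MvPolynomial (Fin d) ℝ),
      (∀ i, (g i).totalDegree ≤ E) → h.totalDegree ≤ E →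
      ∃ C : Fin (M + 1) → MvPolynomial (Fin d) ℝ, C ≠ 0 ∧
        ∑ j, aeval g (C j) * h ^ (j : ℕ) = 0 := by
  set M := ((d + 1) * (E + 1)) ^ d with hM
  refine ⟨M, fun g h hg hh => ?_⟩
  let v : (Fin d → Fin (M + 1)) × Fin (M + 1) → MvPolynomial (Fin d) ℝ :=
    fun w => (∏ i, g i ^ (w.1 i : ℕ)) * h ^ (w.2 : ℕ)
  have hpow (q : MvPolynomial (Fin d) ℝ) (hq : q.totalDegree ≤ E) (j : Fin (M + 1)) :
      (q ^ (j : ℕ)).totalDegree ≤ M * E :=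
    (totalDegree_pow _ _).trans (Nat.mul_le_mul (Nat.lt_succ_iff.1 j.2) hq)
  have hv (w) : (v w).totalDegree ≤ (d + 1) * (M * E) := by
    refine (totalDegree_mul _ _).trans ?_
    rw [add_mul, one_mul]
    refine add_le_add ((totalDegree_finsetProd _ _).trans ?_) (hpow h hh _)
    simpa using Finset.sum_le_card_nsmul Finset.univ _ (M * E) fun i _ => hpow (g i) (hg i) (w.1 i)
  have hcard : ((d + 1) * (M * E) + 1) ^ d <
      Fintype.card ((Fin d → Fin (M + 1)) × Fin (M + 1)) := by
    calc ((d + 1) * (M * E) + 1) ^ d ≤ ((d + 1) * (E + 1) * (M + 1)) ^ d := by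
          gcongr
          nlinarith [Nat.zero_le (d * M), Nat.zero_le (d * E), Nat.zero_le (d * M * E)]
      _ = (M + 1) ^ d * M := by rw [mul_pow, ← hM, mul_comm]
      _ < (M + 1) ^ d * (M + 1) := by gcongr; exact Nat.lt_succ_self M
      _ = _ := by simp
  obtain ⟨u, hu0, hu⟩ := exists_linear_relation v hv hcard
  refine ⟨fun j => ∑ α : Fin d → Fin (M + 1),
    monomial (Finsupp.equivFunOnFinite.symm fun i => (α i : ℕ)) (u (α, j)), ?_, ?_⟩
  · intro hC
    apply hu0
    ext ⟨α, j⟩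
    have h1 := congrArg (coeff (Finsupp.equivFunOnFinite.symm fun i => (α i : ℕ))) (congrFun hC j)
    have hinj (β : Fin d → Fin (M + 1)) :
        (Finsupp.equivFunOnFinite.symm fun i => (β i : ℕ)) =
          (Finsupp.equivFunOnFinite.symm fun i => (α i : ℕ)) ↔ β = α :=
      (Finsupp.equivFunOnFinite.symm.injective.comp Fin.val_injective.comp_left).eq_iff
    simpa [coeff_sum, coeff_monomial, hinj] using h1
  · rw [← hu, Fintype.sum_prod_type_right]
    refine Finset.sum_congr rfl fun j _ => ?_
    rw [map_sum, Finset.sum_mul]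
    refine Finset.sum_congr rfl fun α _ => ?_
    rw [aeval_monomial, Finsupp.prod_fintype _ _ (by simp)]
    simp [v, Algebra.smul_def, mul_assoc]

theorem exists_eval_pderiv_eq {d : ℕ} (f : MvPolynomial (Fin d) ℝ) {a : Fin d → ℝ}
    {r : ℝ} (hr : 0 < r) (ha : eval a f = 0)
    (hpos : ∀ x ∈ Metric.closedBall a r, x ≠ a → 0 < eval x f) :
    ∃ δ > 0, ∀ c : Fin d → ℝ, (∀ i, |c i| < δ) →
      ∃ x ∈ Metric.ball a r, ∀ i, eval x (pderiv i f) = c i := by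
  obtain ⟨μ, hμ, hμf⟩ := (isCompact_sphere a r).exists_forall_le'
    (f := fun x => eval x f) (a := 0) (continuous_eval f).continuousOn fun x hx =>
      hpos x (Metric.sphere_subset_closedBall hx) (Metric.ne_of_mem_sphere hx hr.ne')
  have hden : 0 < d * r + 1 := by positivity
  refine ⟨μ / (d * r + 1), div_pos hμ hden, fun c hc => ?_⟩
  let g : MvPolynomial (Fin d) ℝ := f - ∑ i, C (c i) * X i
  have hg (x) : eval x g = eval x f - ∑ i, c i * x i := by simp [g]
  obtain ⟨x, hx, hmin⟩ := (isCompact_closedBall a r).exists_isMinOn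
    (Metric.nonempty_closedBall.2 hr.le) (continuous_eval g).continuousOn
  have hxb : x ∈ Metric.ball a r := by
    by_contra hxn
    have hxs : dist x a = r :=
      le_antisymm (Metric.mem_closedBall.1 hx) (not_lt.1 hxn)
    have h1 : eval x g ≤ eval a g := hmin (Metric.mem_closedBall_self hr.le)
    have h2 := hμf x hxs
    have h3 : ∑ i, c i * (x i - a i) ≤ d * (μ / (d * r + 1) * r) := by
      have : ∀ i ∈ Finset.univ, c i * (x i - a i) ≤ μ / (d * r + 1) * r := fun i _ => by
        refine (le_abs_self _).trans ?_
        rw [abs_mul]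
        refine mul_le_mul (hc i).le ?_ (abs_nonneg _) (div_pos hμ hden).le
        exact hxs ▸ dist_le_pi_dist x a i
      simpa using Finset.sum_le_card_nsmul Finset.univ _ _ this
    have h4 : d * (μ / (d * r + 1) * r) < μ := by
      rw [show d * (μ / (d * r + 1) * r) = μ * (d * r) / (d * r + 1) by ring, div_lt_iff₀ hden]
      nlinarith
    rw [hg, hg, ha] at h1
    simp only [mul_sub, Finset.sum_sub_distrib] at h3
    linarith
  refine ⟨x, hxb, fun i => ?_⟩
  have hloc : IsLocalMin (fun y => eval y g) x :=
    hmin.isLocalMin (Filter.mem_of_superset (Metric.isOpen_ball.mem_nhds hxb)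
      Metric.ball_subset_closedBall)
  have h := eval_pderiv_eq_zero_of_isLocalMin g hloc i
  classical
  simpa [g, pderiv_C_mul, pderiv_X, Pi.single_apply, sub_eq_zero] using h

/-- The number of isolated zeros of a nonnegative polynomial is bounded in terms of its degree. -/
theorem exists_card_isolated_zeros_le (d E : ℕ) :
    ∃ K : ℕ, ∀ f : MvPolynomial (Fin d) ℝ, f.totalDegree ≤ E → (∀ x, 0 ≤ eval x f) →
      ∀ A : Finset (Fin d → ℝ),
        (∀ a ∈ A, eval a f = 0 ∧ ¬ AccPt a (.principal {x | eval x f = 0})) →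
        A.card ≤ K := by
  obtain ⟨M, hM⟩ := exists_algebraic_relation d (E + 1)
  refine ⟨M ^ d, fun f hf hnonneg A hA => ?_⟩
  choose C hC0 hC using fun i : Fin d => hM (fun j => pderiv j f) (X i)
    (fun j => (totalDegree_pderiv_le f j).trans (hf.trans (Nat.le_succ E))) (by simp)
  choose j hj using fun i => Function.ne_iff.1 (hC0 i)
  -- a common radius for which the balls around the points of `A` are disjoint and isolating
  have hrad : ∃ r > 0, (∀ a ∈ A, ∀ x ∈ Metric.closedBall a r, x ≠ a → 0 < eval x f) ∧
      ∀ a ∈ A, ∀ b ∈ A, a ≠ b → Disjoint (Metric.ball a r) (Metric.ball b r) := by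
    have h1 : ∀ᶠ r in nhdsWithin (0 : ℝ) (Set.Ioi 0), ∀ a ∈ A, ∀ x ∈ Metric.closedBall a r,
        x ≠ a → 0 < eval x f := by
      rw [Filter.eventually_all_finset]
      intro a ha
      have := (hA a ha).2
      rw [accPt_iff_frequently, Filter.not_frequently, Metric.eventually_nhds_iff] at this
      obtain ⟨ε, hε, h⟩ := this
      filter_upwards [Ioo_mem_nhdsGT hε] with r hr x hx hxa
      refine lt_of_le_of_ne (hnonneg x) fun h0 => ?_
      exact h ((Metric.mem_closedBall.1 hx).trans_lt hr.2) ⟨hxa, h0.symm⟩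
    have h2 : ∀ᶠ r in nhdsWithin (0 : ℝ) (Set.Ioi 0), ∀ a ∈ A, ∀ b ∈ A, a ≠ b →
        Disjoint (Metric.ball a r) (Metric.ball b r) := by
      rw [Filter.eventually_all_finset]
      intro a ha
      rw [Filter.eventually_all_finset]
      intro b hb
      by_cases hab : a = b
      · simp [hab]
      · filter_upwards [Ioo_mem_nhdsGT (half_pos (dist_pos.2 hab))] with r hr _
        exact Metric.ball_disjoint_ball (by linarith [hr.2])
    obtain ⟨r, hr1, hr2, hr0⟩ := (h1.and (h2.and self_mem_nhdsWithin)).exists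
    exact ⟨r, hr0, hr1, hr2⟩
  obtain ⟨r, hr, hiso, hdisj⟩ := hrad
  have hgrad : ∀ᶠ δ in nhdsWithin (0 : ℝ) (Set.Ioi 0),
      ∀ a ∈ A, ∀ c : Fin d → ℝ, (∀ i, |c i| < δ) →
      ∃ x ∈ Metric.ball a r, ∀ i, eval x (pderiv i f) = c i := by
    rw [Filter.eventually_all_finset]
    intro a ha
    obtain ⟨δ, hδ, h⟩ := exists_eval_pderiv_eq f hr (hA a ha).1 (hiso a ha)
    filter_upwards [Ioo_mem_nhdsGT hδ] with δ' hδ' c hc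
    exact h c fun i => (hc i).trans hδ'.2
  obtain ⟨δ, hδ, hδ0⟩ := (hgrad.and self_mem_nhdsWithin).exists
  -- a small gradient value at which no chosen coefficient vanishes
  have hprod : (∏ i, C i (j i)) ≠ 0 := Finset.prod_ne_zero_iff.2 fun i _ => hj i
  obtain ⟨c, hcδ, hc⟩ : ∃ c : Fin d → ℝ, (∀ i, |c i| < δ) ∧ eval c (∏ i, C i (j i)) ≠ 0 := by
    by_contra! hcon
    refine hprod (funext_set (fun _ => Set.Ioo (-δ) δ)
      (fun _ => Set.Ioo_infinite (neg_lt_self hδ0)) fun x hx => ?_)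
    rw [map_zero]
    exact hcon x fun i => abs_lt.2 (hx i (Set.mem_univ i))
  rw [map_prod] at hc
  let R (i : Fin d) : Polynomial ℝ :=
    ∑ l : Fin (M + 1), Polynomial.C (eval c (C i l)) * Polynomial.X ^ (l : ℕ)
  have hR0 (i) : R i ≠ 0 := fun h => by
    have := congrArg (fun p => p.coeff (j i)) h
    simp only [R, Polynomial.finsetSum_coeff, Polynomial.coeff_C_mul_X_pow, Fin.val_inj,
      Finset.sum_ite_eq, Finset.mem_univ, if_true, Polynomial.coeff_zero] at this
    exact Finset.prod_ne_zero_iff.1 hc i (Finset.mem_univ i) this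
  have hRdeg (i) : (R i).natDegree ≤ M :=
    Polynomial.natDegree_sum_le_of_forall_le _ _ fun l _ =>
      (Polynomial.natDegree_C_mul_X_pow_le _ _).trans (Nat.lt_succ_iff.1 l.2)
  have hroot (x : Fin d → ℝ) (hx : ∀ i, eval x (pderiv i f) = c i) (i : Fin d) :
      (R i).eval (x i) = 0 := by
    have h := congrArg (eval x) (hC i)
    simp only [map_sum, map_mul, map_pow, eval_X, map_zero] at h
    simp only [eval_aeval, hx] at h
    simpa [R, Polynomial.eval_finsetSum] using h
  choose! y hyb hy using fun a (ha : a ∈ A) => hδ a ha c hcδ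
  calc A.card ≤ (Fintype.piFinset fun i => (R i).roots.toFinset).card := by
        refine Finset.card_le_card_of_injOn y (fun a ha => ?_) fun a ha b hb hab => ?_
        · simpa [hR0] using hroot (y a) (hy a ha)
        · by_contra hne
          exact Set.disjoint_left.1 (hdisj a ha b hb hne) (hyb a ha) (hab ▸ hyb b hb)
    _ = ∏ i, (R i).roots.toFinset.card := Fintype.card_piFinset _
    _ ≤ ∏ _i : Fin d, M := Finset.prod_le_prod' fun i _ =>
        (Multiset.toFinset_card_le _).trans ((Polynomial.card_roots' _).trans (hRdeg i))
    _ = M ^ d := by simp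

/-- The common zeros of the polynomials of degree at most `D` that vanish on `A` are the zeros of a
single nonnegative polynomial. -/
theorem exists_nonneg_zeroSet_eq {σ : Type*} [Finite σ] (D : ℕ) (A : Set (σ → ℝ)) :
    ∃ f : MvPolynomial σ ℝ, f.totalDegree ≤ 2 * D ∧ (∀ x, 0 ≤ eval x f) ∧
      ∀ x, eval x f = 0 ↔
        ∀ p : MvPolynomial σ ℝ, p.totalDegree ≤ D → (∀ a ∈ A, eval a p = 0) → eval x p = 0 := by
  let S : Submodule ℝ (MvPolynomial σ ℝ) :=
    restrictTotalDegree σ ℝ D ⊓ ⨅ a ∈ A, LinearMap.ker (aeval (R := ℝ) a).toLinearMap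
  have hS (p) : p ∈ S ↔ p.totalDegree ≤ D ∧ ∀ a ∈ A, eval a p = 0 := by
    simp [S, Submodule.mem_iInf, mem_restrictTotalDegree]
  have hfin : FiniteDimensional ℝ S := Submodule.finiteDimensional_of_le inf_le_left
  obtain ⟨T, hT⟩ := (Submodule.fg_iff_finiteDimensional S).2 hfin
  have hTS (b) (hb : b ∈ T) : b ∈ S := hT ▸ Submodule.subset_span hb
  refine ⟨∑ b ∈ T, b ^ 2, ?_, fun x => ?_, fun x => ⟨fun hx p hpD hpA => ?_, fun h => ?_⟩⟩
  · exact totalDegree_finsetSum_le fun b hb =>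
      (totalDegree_pow _ _).trans (Nat.mul_le_mul_left _ ((hS b).1 (hTS b hb)).1)
  · simpa using Finset.sum_nonneg fun b _ => sq_nonneg (eval x b)
  · have hp : p ∈ Submodule.span ℝ (T : Set (MvPolynomial σ ℝ)) := hT ▸ (hS p).2 ⟨hpD, hpA⟩
    rw [map_sum, Finset.sum_eq_zero_iff_of_nonneg fun b _ => by
      rw [map_pow]; exact sq_nonneg _] at hx
    clear hpD hpA
    induction hp using Submodule.span_induction with
    | mem b hb => simpa using hx b hb
    | zero => simp
    | add p q _ _ hp hq => rw [map_add, hp, hq, add_zero]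
    | smul r p _ hp => rw [smul_eval, hp, mul_zero]
  · rw [map_sum]
    refine Finset.sum_eq_zero fun b hb => ?_
    obtain ⟨h1, h2⟩ := (hS b).1 (hTS b hb)
    simp [h b h1 h2]

/-- If `p` vanishes on all tuples from `A`, it vanishes on all tuples from the closure of `A` in the
topology cut out by polynomials of degree at most that of `p`. -/
theorem eval_eq_zero_of_forall_mem {ι σ : Type*} [Finite ι] {D : ℕ} {A V : Set (σ → ℝ)}
    (hV : ∀ x ∈ V, ∀ q : MvPolynomial σ ℝ, q.totalDegree ≤ D → (∀ a ∈ A, eval a q = 0) →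
      eval x q = 0)
    {p : MvPolynomial (ι × σ) ℝ} (hp : p.totalDegree ≤ D)
    (hA : ∀ a : ι → σ → ℝ, (∀ i, a i ∈ A) → eval (fun v => a v.1 v.2) p = 0)
    (x : ι → σ → ℝ) (hx : ∀ i, x i ∈ V) : eval (fun v => x v.1 v.2) p = 0 := by
  classical
  have := Fintype.ofFinite ι
  suffices ∀ s : Finset ι, ∀ x : ι → σ → ℝ, (∀ i ∈ s, x i ∈ V) → (∀ i ∉ s, x i ∈ A) →
      eval (fun v => x v.1 v.2) p = 0 from this Finset.univ x (fun i _ => hx i) (by simp)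
  intro s
  induction s using Finset.induction_on with
  | empty => exact fun x _ h => hA x fun i => h i (Finset.notMem_empty i)
  | insert i s his ih =>
    intro x hxV hxA
    let g : ι × σ → MvPolynomial σ ℝ := fun v => if v.1 = i then X v.2 else C (x v.1 v.2)
    have hg (v) : (g v).totalDegree ≤ 1 := by
      by_cases h : v.1 = i <;> simp [g, h]
    have heval (z : σ → ℝ) : eval z (aeval g p) =
        eval (fun v => Function.update x i z v.1 v.2) p := by
      rw [eval_aeval]
      congr 2 with v
      by_cases h : v.1 = i <;> simp [g, h]
    have h := hV (x i) (hxV i (Finset.mem_insert_self i s)) (aeval g p)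
      ((totalDegree_aeval_le p g hg).trans (by simpa using hp)) fun a ha => by
        rw [heval]
        refine ih _ (fun l hl => ?_) fun l hl => ?_
        · have hli : l ≠ i := fun h => his (h ▸ hl)
          simpa [hli] using hxV l (Finset.mem_insert_of_mem hl)
        · by_cases hli : l = i
          · subst hli; simpa using ha
          · simpa [hli] using hxA l (by simp [hli, hl])
    rwa [heval, Function.update_eq_self] at h

end MvPolynomial

/-- diagonal effective compactness: for all positive `d, D, k` there is
`N` such that for all finite sets `P`, `Q` of polynomials in the `d·k` coordinates of
`k` points of `ℝ^d`, all of total degree at most `D`, if the predicate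
`Φ(x₁,…,x_k) := (∀ p ∈ P, p = 0) ∧ (∀ q ∈ Q, q > 0)` holds on every `k`-tuple of an
`N`-element set `A ⊆ ℝ^d`, then it holds on every `k`-tuple of some infinite set
`X ⊆ ℝ^d`. -/
theorem stmt14 (d D k : ℕ) (hd : 0 < d) (hD : 0 < D) (hk : 0 < k) :
    ∃ N : ℕ, ∀ P Q : Finset (MvPolynomial (Fin k × Fin d) ℝ),
      (∀ p ∈ P, p.totalDegree ≤ D) → (∀ q ∈ Q, q.totalDegree ≤ D) →
      (∃ A : Finset (Fin d → ℝ), A.card = N ∧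
          ∀ a : Fin k → Fin d → ℝ, (∀ i, a i ∈ A) →
            (∀ p ∈ P, MvPolynomial.eval (fun v => a v.1 v.2) p = 0) ∧
            (∀ q ∈ Q, 0 < MvPolynomial.eval (fun v => a v.1 v.2) q)) →
      ∃ X : Set (Fin d → ℝ), X.Infinite ∧
        ∀ x : Fin k → Fin d → ℝ, (∀ i, x i ∈ X) →
          (∀ p ∈ P, MvPolynomial.eval (fun v => x v.1 v.2) p = 0) ∧
          (∀ q ∈ Q, 0 < MvPolynomial.eval (fun v => x v.1 v.2) q) := by
  obtain ⟨K, hK⟩ := MvPolynomial.exists_card_isolated_zeros_le d (2 * D)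
  refine ⟨K + 1, fun P Q hP _ ⟨A, hcard, hA⟩ => ?_⟩
  obtain ⟨f, hfdeg, hfnn, hf⟩ := MvPolynomial.exists_nonneg_zeroSet_eq D (A : Set (Fin d → ℝ))
  obtain ⟨a, haA, hacc⟩ : ∃ a ∈ A, AccPt a (.principal {x | MvPolynomial.eval x f = 0}) := by
    by_contra! hcon
    have := hK f hfdeg hfnn A fun a ha => ⟨(hf a).2 fun p _ h => h a ha, hcon a ha⟩
    omega
  have hopen : ∀ᶠ x in nhds (fun _ : Fin k => a),
      ∀ q ∈ Q, 0 < MvPolynomial.eval (fun v => x v.1 v.2) q := by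
    rw [Filter.eventually_all_finset]
    intro q hq
    have hcont : Continuous fun x : Fin k → Fin d → ℝ => MvPolynomial.eval (fun v => x v.1 v.2) q :=
      (MvPolynomial.continuous_eval q).comp (by fun_prop)
    exact hcont.continuousAt.eventually (lt_mem_nhds <| (hA _ fun _ => haA).2 q hq)
  obtain ⟨r, hr, hball⟩ := Metric.eventually_nhds_iff.1 hopen
  refine ⟨Metric.ball a r ∩ {x | MvPolynomial.eval x f = 0}, fun hfin => ?_,
    fun x hx => ⟨fun p hp => ?_, ?_⟩⟩
  · have hU := Filter.inter_mem (Metric.ball_mem_nhds a hr)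
      ((hfin.subset Set.sdiff_subset).isClosed.compl_mem_nhds
        (Set.notMem_sdiff_of_mem (Set.mem_singleton a)))
    obtain ⟨y, ⟨⟨hy1, hy2⟩, hyV⟩, hya⟩ := accPt_iff_nhds.1 hacc _ hU
    exact hy2 ⟨⟨hy1, hyV⟩, hya⟩
  · exact MvPolynomial.eval_eq_zero_of_forall_mem (fun x hx => (hf x).1 hx) (hP p hp)
      (fun a ha => (hA a ha).1 p hp) x fun i => (hx i).2
  · exact hball ((dist_pi_lt_iff hr).2 fun i => (hx i).1)
end
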